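/- Optimizing the constant-composition E_0 coefficient over compositions recovers the unconstrained sphere packing coefficient: for every classical-quantum channel x ↦ S_x with finite input alphabet X and every ρ ≥ 0, max over probability distributions P on X of E_0^cc(ρ,P) equals min over density operators F on H of max_{x∈X} [−(1+ρ) log Tr(S_x^{1/(1+ρ)} F^{ρ/(1+ρ)})], the maximum and minimum being exchangeable because the objective is affine in P and convex in F. -/

import Mathlib

open scoped BigOperators ComplexOrder
noncomputable section

namespace SPB

/-- `-log t` with the convention that it is `+∞` for `t ≤ 0`. -/
def negLog (t : ℝ) : EReal := if t ≤ 0 then (⊤ : EReal) else ((-Real.log t : ℝ) : EReal)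

/-- Power of a positive semidefinite (more generally Hermitian) matrix by functional calculus
on the eigenvalues, with the convention `0 ^ r = 0` (so `A ^ 0` is the projection onto the
range of `A`). -/
def mpow {ι : Type*} [Fintype ι] [DecidableEq ι] (A : Matrix ι ι ℂ) (r : ℝ) :
    Matrix ι ι ℂ :=
  if hA : A.IsHermitian then
    (hA.eigenvectorUnitary : Matrix ι ι ℂ) *
      Matrix.diagonal (fun i => ((if hA.eigenvalues i = 0 then (0 : ℝ)
        else hA.eigenvalues i ^ r : ℝ) : ℂ)) *
      (star (hA.eigenvectorUnitary : Matrix ι ι ℂ))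
  else 0

/-- A density operator: positive semidefinite with trace one. -/
def IsDensity {ι : Type*} [Fintype ι] [DecidableEq ι] (A : Matrix ι ι ℂ) : Prop :=
  A.PosSemidef ∧ A.trace = 1

/-- A probability distribution on a finite alphabet. -/
def IsProbDist {X : Type*} [Fintype X] (P : X → ℝ) : Prop :=
  (∀ x, 0 ≤ P x) ∧ ∑ x, P x = 1

/-- The constant–composition sphere packing coefficient
`E₀^cc(ρ,P) = min_F -(1+ρ) ∑ₓ P(x) log Tr(Sₓ^{1/(1+ρ)} F^{ρ/(1+ρ)})`. -/
def E0cc {X : Type*} [Fintype X] {d : ℕ} (S : X → Matrix (Fin d) (Fin d) ℂ)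
    (ρ : ℝ) (P : X → ℝ) : EReal :=
  ⨅ F : {F : Matrix (Fin d) (Fin d) ℂ // IsDensity F},
    ((1 + ρ : ℝ) : EReal) *
      ∑ x, ((P x : ℝ) : EReal) *
        negLog ((Matrix.trace (mpow (S x) (1 / (1 + ρ)) * mpow F.1 (ρ / (1 + ρ)))).re)

/-!
Weak duality is the bound of a `P`-average by a maximum. For the converse, restrict to the `F` at
which all traces `Tr(Sₓ^{1/(1+ρ)} F^{ρ/(1+ρ)})` are positive: there `-log Tr(⋯)` is a real-valued
convex function of `F`, because `F ↦ F ^ s` is operator concave for `0 ≤ s ≤ 1`, and for finitely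
many convex functions the minimax theorem follows by separating a point from an open convex subset
of `X → ℝ`. Any other `F` is reached by letting `t → 1` in `t F + (1 - t) F₀`, where `F₀` lies in
the restricted domain: by concavity, the traces at this point are at least `t` times those at `F`.
If no such `F₀` exists then one trace vanishes for all `F`, and both sides are `⊤`.
-/

section ExtendedReal

variable {ι : Type*} {s : Finset ι}

lemma coe_sum (s : Finset ι) (f : ι → ℝ) :
    ((∑ i ∈ s, f i : ℝ) : EReal) = ∑ i ∈ s, (f i : EReal) :=
  map_sum (⟨⟨Real.toEReal, EReal.coe_zero⟩, EReal.coe_add⟩ : ℝ →+ EReal) f s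

lemma sum_ne_bot {f : ι → EReal} (hf : ∀ i ∈ s, f i ≠ ⊥) : ∑ i ∈ s, f i ≠ ⊥ :=
  Finset.sum_induction f (· ≠ ⊥)
    (fun _ _ ha hb => mt EReal.add_eq_bot_iff.mp (not_or.mpr ⟨ha, hb⟩)) EReal.zero_ne_bot hf

lemma sum_eq_top {f : ι → EReal} (hf : ∀ i ∈ s, f i ≠ ⊥) {i : ι} (hi : i ∈ s) (hfi : f i = ⊤) :
    ∑ j ∈ s, f j = ⊤ := by
  classical
  rw [← Finset.add_sum_erase s f hi, hfi]
  exact EReal.top_add_of_ne_bot (sum_ne_bot fun j hj => hf j (Finset.mem_of_mem_erase hj))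

lemma sum_coe_mul {p : ι → ℝ} (hp : ∀ i ∈ s, 0 ≤ p i) (a : EReal) :
    ∑ i ∈ s, (p i : EReal) * a = ((∑ i ∈ s, p i : ℝ) : EReal) * a := by
  classical
  induction s using Finset.induction_on with
  | empty => simp
  | insert i s hi ih =>
    obtain ⟨hpi, hps⟩ := Finset.forall_mem_insert .. |>.mp hp
    rw [Finset.sum_insert hi, Finset.sum_insert hi, ih hps, EReal.coe_add,
      EReal.right_distrib_of_nonneg (EReal.coe_nonneg.mpr hpi)
        (EReal.coe_nonneg.mpr (Finset.sum_nonneg hps))]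

variable {κ : Sort*} {k : ℝ}

lemma coe_mul_iInf (hk : 0 < k) (f : κ → EReal) : (k : EReal) * ⨅ i, f i = ⨅ i, k * f i :=
  GaloisConnection.u_iInf (l := (· / (k : EReal))) fun _ _ =>
    EReal.div_le_iff_le_mul (EReal.coe_pos.mpr hk) (EReal.coe_ne_top k)

lemma coe_mul_iSup (hk : 0 < k) (f : κ → EReal) : (k : EReal) * ⨆ i, f i = ⨆ i, k * f i := by
  simp only [mul_comm (k : EReal)]
  exact GaloisConnection.l_iSup (u := (· / (k : EReal))) fun _ _ =>
    (EReal.le_div_iff_mul_le (EReal.coe_pos.mpr hk) (EReal.coe_ne_top k)).symm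

end ExtendedReal

section NegLog

variable {X : Type*} [Fintype X] {P t : X → ℝ}

lemma negLog_of_nonpos {t : ℝ} (ht : t ≤ 0) : negLog t = ⊤ :=
  if_pos ht

lemma negLog_of_pos {t : ℝ} (ht : 0 < t) : negLog t = ((-Real.log t : ℝ) : EReal) :=
  if_neg ht.not_ge

lemma coe_mul_negLog_ne_bot {p : ℝ} (hp : 0 ≤ p) (t : ℝ) : (p : EReal) * negLog t ≠ ⊥ := by
  rcases le_or_gt t 0 with ht | ht
  · rw [negLog_of_nonpos ht]
    rcases hp.eq_or_lt with rfl | hp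
    · simp
    · simp [EReal.coe_mul_top_of_pos hp]
  · rw [negLog_of_pos ht, ← EReal.coe_mul]
    exact EReal.coe_ne_bot _

lemma sum_mul_negLog_eq_top (hP : ∀ x, 0 ≤ P x) {x : X} (hx : 0 < P x) (htx : t x ≤ 0) :
    ∑ y, (P y : EReal) * negLog (t y) = ⊤ :=
  sum_eq_top (fun y _ => coe_mul_negLog_ne_bot (hP y) (t y)) (Finset.mem_univ x)
    (by rw [negLog_of_nonpos htx, EReal.coe_mul_top_of_pos hx])

lemma sum_mul_negLog_eq_coe (hP : ∀ x, 0 ≤ P x) (ht : ∀ x, 0 < P x → 0 < t x) :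
    ∑ x, (P x : EReal) * negLog (t x) = ((∑ x, P x * -Real.log (t x) : ℝ) : EReal) := by
  rw [coe_sum]
  refine Finset.sum_congr rfl fun x _ => ?_
  rcases (hP x).eq_or_lt with hx | hx
  · simp [← hx]
  · rw [negLog_of_pos (ht x hx), EReal.coe_mul]

end NegLog

section ProbDist

variable {X : Type*} [Fintype X] {P : X → ℝ}

lemma isProbDist_single [DecidableEq X] (x : X) : IsProbDist (Pi.single x (1 : ℝ)) :=
  single_mem_stdSimplex ℝ x

lemma IsProbDist.sum_mul_le_iSup (hP : IsProbDist P) (h : X → EReal) :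
    ∑ x, (P x : EReal) * h x ≤ ⨆ x, h x :=
  calc ∑ x, (P x : EReal) * h x
      ≤ ∑ x, (P x : EReal) * ⨆ y, h y := Finset.sum_le_sum fun x _ =>
        mul_le_mul_of_nonneg_left (le_iSup h x) (EReal.coe_nonneg.mpr (hP.1 x))
    _ = ⨆ y, h y := by rw [sum_coe_mul fun x _ => hP.1 x, hP.2, EReal.coe_one, one_mul]

end ProbDist

section ConvexMinimax

lemma map_nonneg_of_forall_le_on_isUpperSet {V : Type*} [AddCommGroup V] [PartialOrder V]
    [IsOrderedAddMonoid V] [Module ℝ V] [PosSMulMono ℝ V] (φ : V →ₗ[ℝ] ℝ) {C : Set V} {b : ℝ}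
    (hC : IsUpperSet C) (hne : C.Nonempty) (hb : ∀ v ∈ C, b ≤ φ v) {w : V} (hw : 0 ≤ w) :
    0 ≤ φ w := by
  obtain ⟨v, hv⟩ := hne
  by_contra! hφw
  obtain ⟨n, hn⟩ := exists_nat_gt ((φ v - b) / -φ w)
  rw [div_lt_iff₀ (neg_pos.mpr hφw)] at hn
  have hmem : v + (n : ℝ) • w ∈ C :=
    hC (le_add_of_nonneg_right (smul_nonneg n.cast_nonneg hw)) hv
  have hle := hb _ hmem
  rw [map_add, map_smul, smul_eq_mul] at hle
  linarith

lemma exists_isProbDist_forall_lt_sum_mul {X : Type*} [Fintype X] {C : Set (X → ℝ)} {c : ℝ}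
    (hconvex : Convex ℝ C) (hopen : IsOpen C) (hupper : IsUpperSet C) (hne : C.Nonempty)
    (hc : (fun _ => c) ∉ C) : ∃ P, IsProbDist P ∧ ∀ v ∈ C, c < ∑ x, P x * v x := by
  classical
  obtain ⟨φ, hφ⟩ := geometric_hahn_banach_point_open hconvex hopen hc
  set q : X → ℝ := fun x => φ fun y => if x = y then 1 else 0
  have hφ_eq : ∀ v, φ v = ∑ x, q x * v x := fun v =>
    (φ.toLinearMap.pi_apply_eq_sum_univ v).trans (Finset.sum_congr rfl fun x _ => mul_comm ..)
  have hq : ∀ x, 0 ≤ q x := fun x =>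
    map_nonneg_of_forall_le_on_isUpperSet φ.toLinearMap hupper hne (fun v hv => (hφ v hv).le)
      (Pi.le_def.mpr fun y => by split_ifs <;> simp)
  have hσ : 0 < ∑ x, q x := by
    refine (Finset.sum_nonneg fun x _ => hq x).lt_of_ne' fun hzero => ?_
    have hq_zero := (Finset.sum_eq_zero_iff_of_nonneg fun x _ => hq x).mp hzero
    have hlt := hφ _ hne.some_mem
    simp only [hφ_eq, hq_zero _ (Finset.mem_univ _), zero_mul, lt_self_iff_false] at hlt
  set σ := ∑ x, q x
  refine ⟨fun x => q x / σ, ⟨fun x => div_nonneg (hq x) hσ.le, ?_⟩, fun v hv => ?_⟩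
  · rw [← Finset.sum_div, div_self hσ.ne']
  · have hlt := hφ v hv
    simp only [hφ_eq, ← Finset.sum_mul] at hlt
    simp only [div_mul_eq_mul_div, ← Finset.sum_div]
    rwa [lt_div_iff₀' hσ]

variable {X E : Type*} {D : Set E} {f : X → E → ℝ}

/-- The vectors of strict upper bounds for the values `(f x F)ₓ` at some common point `F ∈ D`, that
is, the projection to `X → ℝ` of the joint strict epigraph of the family `f`. -/
def strictUpperValues (f : X → E → ℝ) (D : Set E) : Set (X → ℝ) :=
  {v | ∃ F ∈ D, ∀ x, f x F < v x}

lemma isUpperSet_strictUpperValues : IsUpperSet (strictUpperValues f D) :=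
  fun _ _ hvw ⟨F, hF, hv⟩ => ⟨F, hF, fun x => (hv x).trans_le (hvw x)⟩

lemma isOpen_strictUpperValues [Finite X] : IsOpen (strictUpperValues f D) := by
  have heq : strictUpperValues f D = ⋃ F ∈ D, Set.univ.pi fun x => Set.Ioi (f x F) := by
    ext v
    simp [strictUpperValues]
  rw [heq]
  exact isOpen_biUnion fun F _ => isOpen_set_pi Set.finite_univ fun x _ => isOpen_Ioi

variable [AddCommGroup E] [Module ℝ E]

lemma convex_strictUpperValues (hD : Convex ℝ D) (hf : ∀ x, ConvexOn ℝ D (f x)) :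
    Convex ℝ (strictUpperValues f D) := by
  rintro v ⟨F, hF, hv⟩ w ⟨G, hG, hw⟩ a b ha hb hab
  exact ⟨a • F + b • G, hD hF hG ha hb hab, fun x =>
    ((hf x).convex_strict_epigraph (x := (F, v x)) ⟨hF, hv x⟩ (y := (G, w x)) ⟨hG, hw x⟩
      ha hb hab).2⟩

lemma exists_isProbDist_forall_le_sum_mul [Fintype X] {c : ℝ} (hne : D.Nonempty)
    (hf : ∀ x, ConvexOn ℝ D (f x)) (hc : ∀ F ∈ D, ∃ x, c ≤ f x F) :
    ∃ P, IsProbDist P ∧ ∀ F ∈ D, c ≤ ∑ x, P x * f x F := by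
  obtain ⟨F₀, hF₀⟩ := hne
  obtain ⟨x₀, -⟩ := hc F₀ hF₀
  have hmem : ∀ F ∈ D, ∀ ε > 0, (fun x => f x F + ε) ∈ strictUpperValues f D :=
    fun F hF ε hε => ⟨F, hF, fun x => lt_add_of_pos_right _ hε⟩
  have hc_notMem : (fun _ => c) ∉ strictUpperValues f D := by
    rintro ⟨F, hF, hlt⟩
    obtain ⟨x, hx⟩ := hc F hF
    exact (hlt x).not_ge hx
  obtain ⟨P, hP, hlt⟩ := exists_isProbDist_forall_lt_sum_mul
    (convex_strictUpperValues (hf x₀).1 hf) isOpen_strictUpperValues isUpperSet_strictUpperValues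
    ⟨_, hmem F₀ hF₀ 1 one_pos⟩ hc_notMem
  refine ⟨P, hP, fun F hF => le_of_forall_pos_lt_add fun ε hε => ?_⟩
  calc c < ∑ x, P x * (f x F + ε) := hlt _ (hmem F hF ε hε)
    _ = ∑ x, P x * f x F + ε := by
        simp only [mul_add, Finset.sum_add_distrib, ← Finset.sum_mul, hP.2, one_mul]

end ConvexMinimax

section LogMinimax

variable {X E : Type*} [AddCommGroup E] [Module ℝ E] {D : Set E}

lemma convexOn_neg_log_comp {g : E → ℝ} (hg : ConcaveOn ℝ D g) (hpos : ∀ F ∈ D, 0 < g F) :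
    ConvexOn ℝ D fun F => -Real.log (g F) := by
  refine ConcaveOn.neg ⟨hg.1, fun F hF G hG a b ha hb hab => ?_⟩
  have hmem : 0 < a • g F + b • g G := convex_Ioi (0 : ℝ) (hpos F hF) (hpos G hG) ha hb hab
  exact (strictConcaveOn_log_Ioi.concaveOn.2 (hpos F hF) (hpos G hG) ha hb hab).trans
    (Real.log_le_log hmem (hg.2 hF hG ha hb hab))

lemma exists_mem_forall_pos [Finite X] [Nonempty X] {g : X → E → ℝ}
    (hg : ∀ x, ConcaveOn ℝ D (g x)) (hg0 : ∀ x, ∀ F ∈ D, 0 ≤ g x F)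
    (hpos : ∀ x, ∃ F ∈ D, 0 < g x F) : ∃ F ∈ D, ∀ x, 0 < g x F := by
  have := Fintype.ofFinite X
  choose G hGD hG using hpos
  set w : X → ℝ := fun _ => (Fintype.card X : ℝ)⁻¹
  have hw : ∀ x, 0 < w x := fun _ => inv_pos.mpr (Nat.cast_pos.mpr Fintype.card_pos)
  have hw_sum : ∑ x, w x = 1 := by simp [w]
  refine ⟨∑ y, w y • G y, (hg (Classical.arbitrary X)).1.sum_mem (fun y _ => (hw y).le) hw_sum
    fun y _ => hGD y, fun x => ?_⟩
  calc 0 < ∑ y, w y • g x (G y) :=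
        Finset.sum_pos' (fun y _ => mul_nonneg (hw y).le (hg0 x _ (hGD y)))
          ⟨x, Finset.mem_univ x, mul_pos (hw x) (hG x)⟩
    _ ≤ g x (∑ y, w y • G y) :=
        (hg x).le_map_sum (fun y _ => (hw y).le) hw_sum fun y _ => hGD y

lemma neg_log_map_add_le {g : E → ℝ} (hg : ConcaveOn ℝ D g) {F G : E} (hF : F ∈ D)
    (hG : G ∈ D) (hgF : 0 < g F) (hgG : 0 ≤ g G) {t : ℝ} (ht0 : 0 < t) (ht1 : t ≤ 1) :
    -Real.log (g (t • F + (1 - t) • G)) ≤ -Real.log (g F) - Real.log t := by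
  have hle : t * g F ≤ g (t • F + (1 - t) • G) :=
    (le_add_of_nonneg_right (mul_nonneg (sub_nonneg.mpr ht1) hgG)).trans
      (hg.2 hF hG ht0.le (sub_nonneg.mpr ht1) (add_sub_cancel t 1))
  have hlog := Real.log_le_log (mul_pos ht0 hgF) hle
  rw [Real.log_mul ht0.ne' hgF.ne'] at hlog
  linarith

variable [Fintype X] {g : X → E → ℝ}

lemma le_sum_mul_neg_log_of_forall_pos {P : X → ℝ} {c : ℝ} (hP : IsProbDist P)
    (hg : ∀ x, ConcaveOn ℝ D (g x))
    (hc : ∀ F ∈ D, (∀ x, 0 < g x F) → c ≤ ∑ x, P x * -Real.log (g x F))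
    {F₀ : E} (hF₀ : F₀ ∈ D) (hpos₀ : ∀ x, 0 < g x F₀)
    {F : E} (hF : F ∈ D) (hF_nonneg : ∀ x, 0 ≤ g x F) (hpos : ∀ x, 0 < P x → 0 < g x F) :
    c ≤ ∑ x, P x * -Real.log (g x F) := by
  have hbound : ∀ t ∈ Set.Ioo (0 : ℝ) 1, c ≤ ∑ x, P x * -Real.log (g x F) - Real.log t := by
    rintro t ⟨ht0, ht1⟩
    have hpos_mix : ∀ x, 0 < g x (t • F + (1 - t) • F₀) := fun x =>
      (add_pos_of_nonneg_of_pos (mul_nonneg ht0.le (hF_nonneg x))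
        (mul_pos (sub_pos.mpr ht1) (hpos₀ x))).trans_le
        ((hg x).2 hF hF₀ ht0.le (sub_pos.mpr ht1).le (add_sub_cancel t 1))
    have hmem_mix : t • F + (1 - t) • F₀ ∈ D := by
      obtain ⟨x, -⟩ := Finset.nonempty_of_sum_ne_zero (hP.2.trans_ne one_ne_zero)
      exact (hg x).1 hF hF₀ ht0.le (sub_pos.mpr ht1).le (add_sub_cancel t 1)
    calc c ≤ ∑ x, P x * -Real.log (g x (t • F + (1 - t) • F₀)) := hc _ hmem_mix hpos_mix
      _ ≤ ∑ x, P x * (-Real.log (g x F) - Real.log t) := Finset.sum_le_sum fun x _ => by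
          rcases (hP.1 x).eq_or_lt with hx | hx
          · simp [← hx]
          · exact mul_le_mul_of_nonneg_left
              (neg_log_map_add_le (hg x) hF hF₀ (hpos x hx) (hpos₀ x).le ht0 ht1.le) hx.le
      _ = ∑ x, P x * -Real.log (g x F) - Real.log t := by
          simp only [mul_sub, Finset.sum_sub_distrib, ← Finset.sum_mul, hP.2, one_mul]
  have htendsto : Filter.Tendsto (fun t => ∑ x, P x * -Real.log (g x F) - Real.log t)
      (nhdsWithin 1 (Set.Iio 1)) (nhds (∑ x, P x * -Real.log (g x F))) := by
    have hlog := (Real.continuousAt_log one_ne_zero).tendsto.mono_left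
      (nhdsWithin_le_nhds (s := Set.Iio 1))
    simpa only [Real.log_one, sub_zero] using hlog.const_sub (∑ x, P x * -Real.log (g x F))
  exact ge_of_tendsto htendsto (Filter.mem_of_superset (Ioo_mem_nhdsLT zero_lt_one) hbound)

variable [Nonempty X]

lemma exists_isProbDist_forall_le_sum_mul_negLog (hg : ∀ x, ConcaveOn ℝ D (g x))
    (hg0 : ∀ x, ∀ F ∈ D, 0 ≤ g x F) {c : ℝ} (hc : ∀ F ∈ D, ∃ x, (c : EReal) ≤ negLog (g x F)) :
    ∃ P, IsProbDist P ∧ ∀ F ∈ D, (c : EReal) ≤ ∑ x, (P x : EReal) * negLog (g x F) := by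
  classical
  by_cases hpos : ∀ x, ∃ F ∈ D, 0 < g x F
  · obtain ⟨F₀, hF₀, hpos₀⟩ := exists_mem_forall_pos hg hg0 hpos
    set Dpos : Set E := {F ∈ D | ∀ x, 0 < g x F}
    have hDpos : Convex ℝ Dpos := fun F hF G hG a b ha hb hab =>
      ⟨(hg (Classical.arbitrary X)).1 hF.1 hG.1 ha hb hab, fun x =>
        ((hg x).convex_gt 0 ⟨hF.1, hF.2 x⟩ ⟨hG.1, hG.2 x⟩ ha hb hab).2⟩
    obtain ⟨P, hP, hcP⟩ := exists_isProbDist_forall_le_sum_mul (D := Dpos) ⟨F₀, hF₀, hpos₀⟩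
      (fun x => convexOn_neg_log_comp ((hg x).subset (Set.sep_subset ..) hDpos)
        fun F hF => hF.2 x)
      (fun F hF => (hc F hF.1).imp fun x hx => by
        rwa [negLog_of_pos (hF.2 x), EReal.coe_le_coe_iff] at hx)
    refine ⟨P, hP, fun F hF => ?_⟩
    by_cases hposF : ∀ x, 0 < P x → 0 < g x F
    · rw [sum_mul_negLog_eq_coe hP.1 hposF, EReal.coe_le_coe_iff]
      exact le_sum_mul_neg_log_of_forall_pos hP hg (fun G hG hGpos => hcP G ⟨hG, hGpos⟩)
        hF₀ hpos₀ hF (fun x => hg0 x F hF) hposF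
    · push Not at hposF
      obtain ⟨x, hPx, hgx⟩ := hposF
      exact le_top.trans_eq (sum_mul_negLog_eq_top hP.1 hPx hgx).symm
  · push Not at hpos
    obtain ⟨x, hx⟩ := hpos
    have hP := isProbDist_single x
    exact ⟨Pi.single x 1, hP, fun F hF => le_top.trans_eq
      (sum_mul_negLog_eq_top hP.1 (by simp) (hx F hF)).symm⟩

theorem iSup_iInf_sum_mul_negLog_eq_iInf_iSup (hg : ∀ x, ConcaveOn ℝ D (g x))
    (hg0 : ∀ x, ∀ F ∈ D, 0 ≤ g x F) :
    ⨆ P : {P : X → ℝ // IsProbDist P}, ⨅ F : D, ∑ x, (P.1 x : EReal) * negLog (g x F) =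
      ⨅ F : D, ⨆ x, negLog (g x F) := by
  apply le_antisymm
  · exact iSup_le fun P => iInf_mono fun F => P.2.sum_mul_le_iSup _
  · refine EReal.ge_of_forall_gt_iff_ge.mp fun c hc => ?_
    obtain ⟨P, hP, hcP⟩ := exists_isProbDist_forall_le_sum_mul_negLog hg hg0 fun F hF =>
      (lt_iSup_iff.mp (hc.trans_le (iInf_le _ ⟨F, hF⟩))).imp fun _ => le_of_lt
    exact le_iSup_of_le ⟨P, hP⟩ (le_iInf fun F => hcP F F.2)

end LogMinimax

section MatrixPower

open scoped MatrixOrder Matrix.Norms.L2Operator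

variable {ι : Type*} [Fintype ι] {A : Matrix ι ι ℂ}

lemma trace_mul_nonneg {𝕜 : Type*} [RCLike 𝕜] {A B : Matrix ι ι 𝕜} (hA : A.PosSemidef)
    (hB : B.PosSemidef) : 0 ≤ (A * B).trace := by
  classical
  obtain ⟨C, rfl⟩ := CStarAlgebra.nonneg_iff_eq_star_mul_self.mp hB.nonneg
  rw [← mul_assoc, Matrix.trace_mul_comm, ← mul_assoc]
  exact (hA.mul_mul_conjTranspose_same C).trace_nonneg

lemma re_trace_mul_le_re_trace_mul (hA : A.PosSemidef) {B C : Matrix ι ι ℂ} (hBC : B ≤ C) :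
    (A * B).trace.re ≤ (A * C).trace.re := by
  have hnonneg := trace_mul_nonneg hA (Matrix.le_iff.mp hBC)
  rw [mul_sub, Matrix.trace_sub, sub_nonneg] at hnonneg
  exact (Complex.le_def.mp hnonneg).1

variable [DecidableEq ι] {s : ℝ}

lemma mpow_eq_cfc (hA : A.IsHermitian) (r : ℝ) :
    mpow A r = cfc (fun x : ℝ => if x = 0 then (0 : ℝ) else x ^ r) A := by
  rw [hA.cfc_eq, mpow, dif_pos hA, Matrix.IsHermitian.cfc, Unitary.conjStarAlgAut_apply]
  rfl

lemma mpow_eq_rpow (hA : A.PosSemidef) (hs : s ≠ 0) : mpow A s = A ^ s := by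
  rw [mpow_eq_cfc hA.1, CFC.rpow_eq_cfc_real hA.nonneg]
  refine cfc_congr fun x _ => ite_eq_right_iff.mpr ?_
  rintro rfl
  exact (Real.zero_rpow hs).symm

lemma posSemidef_mpow (hA : A.PosSemidef) (r : ℝ) : (mpow A r).PosSemidef := by
  rw [mpow_eq_cfc hA.1, ← Matrix.nonneg_iff_posSemidef]
  refine cfc_nonneg fun x hx => ?_
  have hx0 : 0 ≤ x := spectrum_nonneg_of_nonneg hA.nonneg hx
  positivity

lemma continuous_mpow (A : Matrix ι ι ℂ) : Continuous (mpow A) := by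
  unfold mpow
  split_ifs with hA
  · refine (continuous_const.matrix_mul (Continuous.matrix_diagonal ?_)).matrix_mul continuous_const
    refine continuous_pi fun i => Complex.continuous_ofReal.comp ?_
    split_ifs with hi
    · exact continuous_const
    · exact Real.continuous_const_rpow hi
  · exact continuous_const

lemma concaveOn_mpow (hs : s ∈ Set.Icc 0 1) :
    ConcaveOn ℝ (Set.Ici (0 : Matrix ι ι ℂ)) (mpow · s) := by
  have hconcave : ∀ r ∈ Set.Ioc (0 : ℝ) 1, ConcaveOn ℝ (Set.Ici (0 : Matrix ι ι ℂ)) (mpow · r) :=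
    fun r hr => (CFC.concaveOn_rpow ⟨hr.1.le, hr.2⟩).congr fun F hF =>
      (mpow_eq_rpow (Matrix.nonneg_iff_posSemidef.mp hF) hr.1.ne').symm
  rcases hs.1.eq_or_lt with rfl | hs0
  · -- `mpow F 0` is the range projection of `F` whereas `F ^ 0 = 1`, hence the limit `r → 0⁺`.
    have htendsto : Filter.Tendsto (fun r (F : Matrix ι ι ℂ) => mpow F r)
        (nhdsWithin 0 (Set.Ioi 0)) (nhds (mpow · 0)) :=
      tendsto_pi_nhds.mpr fun F => (continuous_mpow F).continuousWithinAt
    exact isClosed_setOfPred_concaveOn.mem_of_tendsto htendsto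
      (Filter.mem_of_superset (Ioc_mem_nhdsGT zero_lt_one) hconcave)
  · exact hconcave s ⟨hs0, hs.2⟩

lemma concaveOn_re_trace_mul_mpow (hA : A.PosSemidef) (hs : s ∈ Set.Icc 0 1) :
    ConcaveOn ℝ (Set.Ici (0 : Matrix ι ι ℂ)) fun F => (A * mpow F s).trace.re := by
  refine ⟨convex_Ici 0, fun F hF G hG a b ha hb hab => ?_⟩
  calc a • (A * mpow F s).trace.re + b • (A * mpow G s).trace.re
      = (A * (a • mpow F s + b • mpow G s)).trace.re := by
        simp only [mul_add, Matrix.mul_smul, Matrix.trace_add, Matrix.trace_smul, Complex.add_re,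
          Complex.smul_re]
    _ ≤ (A * mpow (a • F + b • G) s).trace.re :=
        re_trace_mul_le_re_trace_mul hA ((concaveOn_mpow hs).2 hF hG ha hb hab)

lemma convex_setOf_isDensity : Convex ℝ {F : Matrix ι ι ℂ | IsDensity F} := by
  rintro F ⟨hF, hF1⟩ G ⟨hG, hG1⟩ a b ha hb hab
  refine ⟨(hF.smul ha).add (hG.smul hb), ?_⟩
  rw [Matrix.trace_add, Matrix.trace_smul, Matrix.trace_smul, hF1, hG1, ← add_smul, hab, one_smul]

lemma concaveOn_re_trace_mul_mpow_isDensity (hA : A.PosSemidef) (hs : s ∈ Set.Icc 0 1) :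
    ConcaveOn ℝ {F : Matrix ι ι ℂ | IsDensity F} fun F => (A * mpow F s).trace.re :=
  (concaveOn_re_trace_mul_mpow hA hs).subset (fun _ hF => hF.1.nonneg) convex_setOf_isDensity

end MatrixPower

theorem max_E0cc_eq_min_max_general
    {X : Type*} [Fintype X] [Nonempty X] {d : ℕ}
    (S : X → Matrix (Fin d) (Fin d) ℂ) (hS : ∀ x, (S x).PosSemidef)
    (ρ : ℝ) (hρ : 0 ≤ ρ) :
    (⨆ P : {P : X → ℝ // IsProbDist P}, E0cc S ρ P.1) =
      ⨅ F : {F : Matrix (Fin d) (Fin d) ℂ // IsDensity F},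
        ⨆ x : X, ((1 + ρ : ℝ) : EReal) *
          negLog ((Matrix.trace (mpow (S x) (1 / (1 + ρ)) * mpow F.1 (ρ / (1 + ρ)))).re) := by
  have hk : 0 < 1 + ρ := by linarith
  have hs : ρ / (1 + ρ) ∈ Set.Icc (0 : ℝ) 1 :=
    ⟨div_nonneg hρ hk.le, div_le_one_of_le₀ (by linarith) hk.le⟩
  have hpow : ∀ x, (mpow (S x) (1 / (1 + ρ))).PosSemidef := fun x => posSemidef_mpow (hS x) _
  have hminimax := iSup_iInf_sum_mul_negLog_eq_iInf_iSup
    (fun x => concaveOn_re_trace_mul_mpow_isDensity (hpow x) hs)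
    fun x F hF => (Complex.nonneg_iff.mp (trace_mul_nonneg (hpow x) (posSemidef_mpow hF.1 _))).1
  simp only [E0cc, ← coe_mul_iInf hk, ← coe_mul_iSup hk]
  exact congrArg (((1 + ρ : ℝ) : EReal) * ·) hminimax

/-- Optimizing `E₀^cc(ρ,P)` over compositions `P` recovers the unconstrained sphere packing
coefficient `E₀(ρ) = min_F max_x [-(1+ρ) log Tr(Sₓ^{1/(1+ρ)} F^{ρ/(1+ρ)})]`. -/
theorem max_E0cc_eq_min_max
    {X : Type*} [Fintype X] [DecidableEq X] [Nonempty X] {d : ℕ}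
    (S : X → Matrix (Fin d) (Fin d) ℂ) (hS : ∀ x, IsDensity (S x))
    (ρ : ℝ) (hρ : 0 ≤ ρ) :
    (⨆ P : {P : X → ℝ // IsProbDist P}, E0cc S ρ P.1) =
      ⨅ F : {F : Matrix (Fin d) (Fin d) ℂ // IsDensity F},
        ⨆ x : X, ((1 + ρ : ℝ) : EReal) *
          negLog ((Matrix.trace (mpow (S x) (1 / (1 + ρ)) * mpow F.1 (ρ / (1 + ρ)))).re) := by
  exact max_E0cc_eq_min_max_general S (fun x => (hS x).1) ρ hρ

end SPB
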